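/- Theorem 2 (worst-case gap bound): Let K and N be positive integers, set N̄ := min(K,N), and let M ∈ [0, N). Define R_YMA(K,N,M) := N̄ if M = 0 and R_YMA(K,N,M) := ((N−M)/M)·(1 − (1 − M/N)^N̄) if M ∈ (0,N); define R^low_worst(K,N,M) := max over ℓ ∈ {1,…,N̄} of max{ ℓ − M·ℓ²/N , ℓ − M·∑_{k=1}^{ℓ} k/(N−k+1) }. Then for every real number C such that φ(a,ℓ) ≤ C for all ℓ ∈ ℤ⁺ and all a ∈ (0,1), it holds that R_YMA(K,N,M) ≤ C·R^low_worst(K,N,M). (Since the worst-case rate-memory tradeoff R*_worst(M) satisfies R^low_worst(K,N,M) ≤ R*_worst(M) ≤ R_YMA(K,N,M), this gives R*_worst(M)/R^low_worst(K,N,M) ≤ sup_{ℓ∈ℤ⁺} sup_{a∈(0,1)} φ(a,ℓ).) -/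

import Mathlib

/-- The function `φ(a,ℓ)` from Theorem 2 of the paper. -/
noncomputable def phi (a : ℝ) (ℓ : ℕ) : ℝ :=
  ((a * ((ℓ : ℝ) + 1) / ((1 - a) * (ℓ : ℝ))) *
      (1 - (((ℓ : ℝ) + a) / ((ℓ : ℝ) + 1)) ^ ((ℓ : ℝ) / a))) /
    (1 - (1 - a) * ∑ j ∈ Finset.range ℓ, 1 / ((ℓ : ℝ) - a * (j : ℝ)))

/-- The Yu–Maddah-Ali–Avestimehr achievable (worst-case) rate for decentralized
coded caching with `K` users, `N` files and cache size `M`. -/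
noncomputable def RYMA (K N : ℕ) (M : ℝ) : ℝ :=
  if M = 0 then (min K N : ℝ)
  else ((N : ℝ) - M) / M * (1 - (1 - M / (N : ℝ)) ^ min K N)

/-- Polynomial form of the YMA rate. -/
noncomputable def ySum (n N : ℕ) (M : ℝ) : ℝ :=
  ∑ i ∈ Finset.range n, (1 - M / (N : ℝ)) ^ (i + 1)

/-- The second family of lower bounds, affine in `M`. -/
noncomputable def lowF (N ℓ : ℕ) (M : ℝ) : ℝ :=
  (ℓ : ℝ) - M * ∑ k ∈ Finset.Icc 1 ℓ, (k : ℝ) / ((N : ℝ) - (k : ℝ) + 1)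

/-- Breakpoints. -/
noncomputable def brk (N ℓ : ℕ) : ℝ := ((N : ℝ) - ℓ) / ((ℓ : ℝ) + 1)

lemma ySum_closed (n N : ℕ) (hN : 0 < N) (M : ℝ) (hM : M ≠ 0) :
    ((N : ℝ) - M) / M * (1 - (1 - M / (N : ℝ)) ^ n) = ySum n N M := by
  have hN' : (N : ℝ) ≠ 0 := by positivity
  have h := geom_sum_mul (1 - M / (N : ℝ)) n
  have e : ySum n N M = (∑ i ∈ Finset.range n, (1 - M / (N : ℝ)) ^ i) * (1 - M / N) := by
    unfold ySum
    rw [Finset.sum_mul]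
    exact Finset.sum_congr rfl fun i _ => pow_succ _ _
  have h1 : 1 - (1 - M / (N : ℝ)) ^ n
      = (∑ i ∈ Finset.range n, (1 - M / (N : ℝ)) ^ i) * (M / N) := by
    linarith
  rw [h1, e]
  field_simp

lemma RYMA_eq (K N : ℕ) (hN : 0 < N) (M : ℝ) : RYMA K N M = ySum (min K N) N M := by
  unfold RYMA
  split_ifs with h
  · subst h
    simp [ySum]
  · exact ySum_closed _ N hN M h

lemma ySum_mono (n m N : ℕ) (hN : 0 < N) (h : n ≤ m) (M : ℝ) (hM : M ≤ N) :
    ySum n N M ≤ ySum m N M := by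
  have hN' : (0 : ℝ) < N := by positivity
  have : 0 ≤ 1 - M / (N : ℝ) := by
    rw [sub_nonneg, div_le_one hN']
    exact hM
  unfold ySum
  apply Finset.sum_le_sum_of_subset_of_nonneg
  · exact Finset.range_mono h
  · intros
    positivity

lemma ySum_convex (n N : ℕ) (hN : 0 < N) : ConvexOn ℝ (Set.Icc 0 (N : ℝ)) (ySum n N) := by
  have hN' : (0 : ℝ) < N := by positivity
  have aff : ConvexOn ℝ (Set.Icc 0 (N : ℝ)) (fun M : ℝ => 1 - M / (N : ℝ)) := by
    refine ⟨convex_Icc _ _, ?_⟩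
    intro x _ y _ p q _ _ hpq
    simp only [smul_eq_mul]
    apply le_of_eq
    rw [← hpq]
    have hp : p = 1 - q := by linarith
    subst hp
    ring
  unfold ySum
  induction n with
  | zero => simpa using convexOn_const (0 : ℝ) (convex_Icc (0 : ℝ) (N : ℝ))
  | succ n ih =>
    simp only [Finset.sum_range_succ]
    refine ih.add ?_
    refine aff.pow ?_ (n + 1)
    intro M hM
    rw [sub_nonneg, div_le_one hN']
    exact hM.2

lemma seg (n N ℓ : ℕ) (hN : 0 < N) (C A B M : ℝ) (hA0 : 0 ≤ A) (hBN : B ≤ N)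
    (hAM : A ≤ M) (hMB : M ≤ B)
    (hA : ySum n N A ≤ C * lowF N ℓ A) (hB : ySum n N B ≤ C * lowF N ℓ B) :
    ySum n N M ≤ C * lowF N ℓ M := by
  have aff : ConvexOn ℝ (Set.Icc 0 (N : ℝ)) (fun M : ℝ => - (C * lowF N ℓ M)) := by
    refine ⟨convex_Icc _ _, ?_⟩
    intro x _ y _ p q _ _ hpq
    simp only [smul_eq_mul, lowF]
    apply le_of_eq
    have hp : p = 1 - q := by linarith
    subst hp
    ring
  have h := ((ySum_convex n N hN).add aff).le_max_of_mem_Icc (x := A) (y := B) (z := M)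
    ⟨hA0, by linarith⟩ ⟨by linarith, hBN⟩ ⟨hAM, hMB⟩
  simp only [Pi.add_apply] at h
  rcases le_max_iff.mp h with h | h <;> linarith

lemma one_le_C (C : ℝ) (hC : ∀ ℓ : ℕ, 0 < ℓ → ∀ a ∈ Set.Ioo (0 : ℝ) 1, phi a ℓ ≤ C) :
    1 ≤ C := by
  refine le_trans ?_ (hC 1 one_pos (1 / 2) (by norm_num))
  have e : ((1 : ℝ) / (1 / 2)) = ((2 : ℕ) : ℝ) := by norm_num
  simp only [phi, Nat.cast_one, e, Real.rpow_natCast]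
  norm_num

lemma sum_form (N ℓ : ℕ) (h : ℓ ≤ N) :
    ∑ k ∈ Finset.Icc 1 ℓ, (k : ℝ) / ((N : ℝ) - (k : ℝ) + 1)
      = ((N : ℝ) + 1) * (∑ j ∈ Finset.range ℓ, 1 / ((N : ℝ) - j)) - ℓ := by
  induction ℓ with
  | zero => simp
  | succ m ih =>
    rw [Finset.sum_Icc_succ_top (by omega), ih (by omega), Finset.sum_range_succ]
    have : (m : ℝ) + 1 ≤ N := by exact_mod_cast h
    have h0 : (N : ℝ) - m ≠ 0 := by
      intro h0
      linarith
    push_cast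
    rw [show (N : ℝ) - (m + 1) + 1 = N - m by ring]
    field_simp
    ring

lemma endpoint (n N ℓ : ℕ) (hn : n ≤ N) (h1 : 0 < ℓ) (h : ℓ ≤ N)
    (C : ℝ) (hC : ∀ ℓ : ℕ, 0 < ℓ → ∀ a ∈ Set.Ioo (0 : ℝ) 1, phi a ℓ ≤ C) :
    ySum n N (brk N ℓ) ≤ C * lowF N ℓ (brk N ℓ) := by
  have hN : 0 < N := by omega
  have hC1 := one_le_C C hC
  have hl0 : (0 : ℝ) < ℓ := by positivity
  have hN0 : (0 : ℝ) < N := by positivity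
  rcases h.eq_or_lt with h | h
  · subst h
    have : (n : ℝ) ≤ ℓ := by exact_mod_cast hn
    simp [ySum, brk, lowF]
    nlinarith
  have hlN : (ℓ : ℝ) < N := by exact_mod_cast h
  have hd : (0 : ℝ) < N - ℓ := by linarith
  have hM0 : 0 < brk N ℓ := by
    unfold brk
    positivity
  have hMN : brk N ℓ < N := by
    unfold brk
    rw [div_lt_iff₀ (by positivity)]
    nlinarith
  refine (ySum_mono n N N hN hn _ hMN.le).trans ?_
  rw [← ySum_closed N N hN _ hM0.ne']
  have hp := hC ℓ h1 ((ℓ : ℝ) / N) ⟨by positivity, by rwa [div_lt_one hN0]⟩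
  have hx : ((ℓ : ℝ) + ℓ / N) / (ℓ + 1) = 1 - brk N ℓ / N := by
    unfold brk
    field_simp
    ring
  have he : (ℓ : ℝ) / (ℓ / N) = N := by field_simp
  have hpre : (ℓ : ℝ) / N * (ℓ + 1) / ((1 - ℓ / N) * ℓ) = 1 / brk N ℓ := by
    have : (1 : ℝ) - ℓ / N = (N - ℓ) / N := by field_simp
    unfold brk
    rw [this]
    field_simp
  set T : ℝ := ∑ j ∈ Finset.range ℓ, 1 / ((N : ℝ) - j) with hT
  have hsum : ∑ j ∈ Finset.range ℓ, 1 / ((ℓ : ℝ) - ℓ / N * (j : ℝ)) = N / ℓ * T := by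
    rw [hT, Finset.mul_sum]
    apply Finset.sum_congr rfl
    intro j _
    have : (ℓ : ℝ) - ℓ / N * (j : ℝ) = ℓ / N * (N - j) := by field_simp
    rw [this, one_div, mul_inv, inv_div, one_div]
  have hTlt : ((N : ℝ) - ℓ) * T < ℓ := by
    rw [hT, Finset.mul_sum]
    calc _ < ∑ j ∈ Finset.range ℓ, (1 : ℝ) := by
          apply Finset.sum_lt_sum_of_nonempty
          · simpa using h1.ne'
          · intro j hj
            have hj' : (j : ℝ) < ℓ := by exact_mod_cast Finset.mem_range.mp hj
            rw [mul_one_div, div_lt_one (by linarith)]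
            linarith
      _ = ℓ := by simp
  have hD : 1 - (1 - (ℓ : ℝ) / N) * (N / ℓ * T) = 1 - (N - ℓ) * T / ℓ := by
    field_simp
  have hDpos : 0 < 1 - ((N : ℝ) - ℓ) * T / ℓ := by
    rw [sub_pos, div_lt_one hl0]
    exact hTlt
  simp only [phi] at hp
  rw [hx, he, hpre, hsum, hD, Real.rpow_natCast, div_le_iff₀ hDpos] at hp
  have hF : lowF N ℓ (brk N ℓ) = (N - brk N ℓ) * (1 - (N - ℓ) * T / ℓ) := by
    unfold lowF
    rw [sum_form N ℓ h.le, ← hT]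
    unfold brk
    field_simp
    ring
  rw [hF]
  calc _ = ((N : ℝ) - brk N ℓ) * (1 / brk N ℓ * (1 - (1 - brk N ℓ / N) ^ N)) := by ring
    _ ≤ ((N : ℝ) - brk N ℓ) * (C * (1 - (N - ℓ) * T / ℓ)) :=
        mul_le_mul_of_nonneg_left hp (by linarith)
    _ = _ := by ring

lemma brk_step (N m : ℕ) (h : m < N) : lowF N (m + 1) (brk N m) = lowF N m (brk N m) := by
  have : (m : ℝ) < N := by exact_mod_cast h
  have h0 : (N : ℝ) - m ≠ 0 := by
    intro h0
    linarith
  unfold lowF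
  rw [Finset.sum_Icc_succ_top (by omega)]
  push_cast
  rw [show (N : ℝ) - (m + 1) + 1 = N - m by ring, mul_add]
  have : brk N m * (((m : ℝ) + 1) / (N - m)) = 1 := by
    unfold brk
    field_simp
  rw [this]
  ring

lemma main_ind (n N : ℕ) (hN : 0 < N) (hn : n ≤ N) (C : ℝ)
    (hC : ∀ ℓ : ℕ, 0 < ℓ → ∀ a ∈ Set.Ioo (0 : ℝ) 1, phi a ℓ ≤ C)
    (M : ℝ) (hMN : M < N) (m : ℕ) (hm : m ≤ n) (hM : brk N m ≤ M) :
    ∃ ℓ, 1 ≤ ℓ ∧ ℓ ≤ n ∧ ySum n N M ≤ C * lowF N ℓ M := by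
  induction m with
  | zero =>
    simp [brk] at hM
    linarith
  | succ m ih =>
    rcases le_total (brk N m) M with h | h
    · exact ih (by omega) h
    refine ⟨m + 1, by omega, hm, ?_⟩
    have hmN : (m : ℝ) + 1 ≤ N := by exact_mod_cast hm.trans hn
    refine seg n N (m + 1) hN C (brk N (m + 1)) (brk N m) M ?_ ?_ hM h
      (endpoint n N (m + 1) hn (by omega) (by omega) C hC) ?_
    · unfold brk
      push_cast
      apply div_nonneg
      · linarith
      · positivity
    · unfold brk
      rw [div_le_iff₀ (by positivity)]
      have : (0 : ℝ) ≤ m := by positivity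
      nlinarith
    · rw [brk_step N m (by omega)]
      rcases Nat.eq_zero_or_pos m with h0 | h0
      · subst h0
        have : (N : ℝ) ≠ 0 := by positivity
        simp [brk, ySum, lowF, this]
      · exact endpoint n N m hn h0 (by omega) C hC

/-- **Theorem 2 (worst-case gap bound).** For all `K, N ≥ 1` and `M ∈ [0,N)`,
and any constant `C` dominating `φ(a,ℓ)` for all positive integers `ℓ` and all
`a ∈ (0,1)`, the YMA achievable rate is at most `C` times the lower bound
`R^low_worst(K,N,M) = max_{ℓ ∈ {1,…,min(K,N)}} max{ℓ − Mℓ²/N, ℓ − M∑_{k=1}^{ℓ} k/(N−k+1)}`. -/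
theorem worst_case_gap (K N : ℕ) (hK : 0 < K) (hN : 0 < N)
    (M : ℝ) (hM0 : 0 ≤ M) (hMN : M < N)
    (C : ℝ) (hC : ∀ ℓ : ℕ, 0 < ℓ → ∀ a ∈ Set.Ioo (0 : ℝ) 1, phi a ℓ ≤ C) :
    RYMA K N M ≤
      C * (Finset.Icc 1 (min K N)).sup'
        (Finset.nonempty_Icc.mpr (by omega))
        (fun ℓ => max ((ℓ : ℝ) - M * (ℓ : ℝ) ^ 2 / (N : ℝ))
          ((ℓ : ℝ) - M * ∑ k ∈ Finset.Icc 1 ℓ, (k : ℝ) / ((N : ℝ) - (k : ℝ) + 1))) := by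
  have hC1 := one_le_C C hC
  set n := min K N with hn
  have hn1 : 1 ≤ n := by omega
  have hnN : n ≤ N := by omega
  have key : ∃ ℓ, 1 ≤ ℓ ∧ ℓ ≤ n ∧ ySum n N M ≤ C * lowF N ℓ M := by
    rcases le_total (brk N n) M with h | h
    · exact main_ind n N hN hnN C hC M hMN n le_rfl h
    · refine ⟨n, hn1, le_rfl, ?_⟩
      have h0 : (0 : ℝ) ≤ n := by positivity
      refine seg n N n hN C 0 (brk N n) M le_rfl ?_ hM0 h ?_
        (endpoint n N n hnN (by omega) hnN C hC)
      · unfold brk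
        rw [div_le_iff₀ (by positivity)]
        have : (0 : ℝ) ≤ N := by positivity
        nlinarith
      · simp [ySum, lowF]
        nlinarith
  obtain ⟨ℓ, h1, h2, h3⟩ := key
  rw [RYMA_eq K N hN M]
  refine h3.trans (mul_le_mul_of_nonneg_left ?_ (by linarith))
  refine le_trans (le_max_right _ _) (Finset.le_sup' (f := fun ℓ : ℕ =>
    max ((ℓ : ℝ) - M * (ℓ : ℝ) ^ 2 / (N : ℝ))
      ((ℓ : ℝ) - M * ∑ k ∈ Finset.Icc 1 ℓ, (k : ℝ) / ((N : ℝ) - (k : ℝ) + 1)))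
    (Finset.mem_Icc.mpr ⟨h1, h2⟩))
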